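/- arXiv:2508.01570 — 6 statements merged into one kernel-verified Lean document; each statement's English description precedes it below -/
import Mathlib

section
/- Let $\bar a_P > 0$, $\bar v_E \ge 0$, and initial data $(x_P^0,y_P^0) \ne (x_E^0,y_E^0)$, $(v_{Px}^0,v_{Py}^0) \in \mathbb{R}^2$. For $t \ge 0$ let $D(t) = \sqrt{(x_P^0-x_E^0+v_{Px}^0 t)^2+(y_P^0-y_E^0+v_{Py}^0 t)^2}$, $R_P(t) = \tfrac{1}{2}\bar a_P t^2$ and $R_E(t) = \bar v_E t$. Suppose $t_0 > 0$ satisfies $R_P(t_0) \ge R_E(t_0)$ and $D(t_0) = R_P(t_0) - R_E(t_0)$ (internal tangency of the evader's circle inside the pursuer's circle). Then for every $\theta_E \in \mathbb{R}$ there exists $t' \in (0, t_0]$ such that $\big(x_E^0+\bar v_E t'\cos\theta_E - x_P^0 - v_{Px}^0 t'\big)^2+\big(y_E^0+\bar v_E t'\sin\theta_E - y_P^0 - v_{Py}^0 t'\big)^2 = R_P(t')^2$. -/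
/-!
The distance from the evader to the centre of the pursuer's reachable ball, minus the radius of that
ball, is positive initially. At the tangency time the ball of radius `vE * t0` around the evader's
starting point lies inside the pursuer's ball, so the difference is nonpositive there, and the
intermediate value theorem makes it vanish in between.
-/

open Metric Set

theorem exists_mem_Ioc_mem_sphere {α X : Type*} [ConditionallyCompleteLinearOrder α]
    [TopologicalSpace α] [OrderTopology α] [DenselyOrdered α] [PseudoMetricSpace X]
    {x c : α → X} {r : α → ℝ} {a b : α} (hab : a ≤ b) (hx : ContinuousOn x (Icc a b))
    (hc : ContinuousOn c (Icc a b)) (hr : ContinuousOn r (Icc a b))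
    (ha : x a ∉ closedBall (c a) (r a)) (hb : x b ∈ closedBall (c b) (r b)) :
    ∃ t ∈ Ioc a b, x t ∈ sphere (c t) (r t) := by
  rw [mem_closedBall, not_le] at ha
  have hgap_cont : ContinuousOn (fun t => dist (x t) (c t) - r t) (Icc a b) := by
    fun_prop
  obtain ⟨t, ht, hgap⟩ := intermediate_value_Ioc' hab hgap_cont
    ⟨sub_nonpos.2 (mem_closedBall.1 hb), sub_pos.2 ha⟩
  exact ⟨t, ht, sub_eq_zero.1 hgap⟩

theorem add_smul_mem_closedBall {E : Type*} [SeminormedAddCommGroup E] [NormedSpace ℝ E] (e : E)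
    {u : E} {d : ℝ} (hd : 0 ≤ d) (hu : ‖u‖ ≤ 1) :
    e + d • u ∈ closedBall e d := by
  rw [mem_closedBall, dist_self_add_left, norm_smul, Real.norm_of_nonneg hd]
  exact mul_le_of_le_one_right hd hu

section NormedSpace

variable {E : Type*} [NormedAddCommGroup E] [NormedSpace ℝ E]

theorem tangency_capture_guarantee_general {x : ℝ → E} {p v : E} {a s T : ℝ} (hT : 0 ≤ T)
    (hx : ContinuousOn x (Icc 0 T)) (hne : x 0 ≠ p) (hreach : x T ∈ closedBall (x 0) (s * T))
    (hsub : s * T + dist (x 0) (p + T • v) ≤ 1 / 2 * a * T ^ 2) :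
    ∃ t ∈ Ioc 0 T, x t ∈ sphere (p + t • v) (1 / 2 * a * t ^ 2) := by
  refine exists_mem_Ioc_mem_sphere hT hx (by fun_prop) (by fun_prop) ?_ ?_
  · simpa using hne
  · exact closedBall_subset_closedBall' hsub hreach

theorem exists_capture_of_constant_heading {p v e u : E} {a s T : ℝ} (hs : 0 ≤ s) (hT : 0 ≤ T)
    (hu : ‖u‖ ≤ 1) (hne : e ≠ p) (hsub : s * T + dist e (p + T • v) ≤ 1 / 2 * a * T ^ 2) :
    ∃ t ∈ Ioc 0 T, e + (s * t) • u ∈ sphere (p + t • v) (1 / 2 * a * t ^ 2) := by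
  refine tangency_capture_guarantee_general (s := s) hT (by fun_prop) (by simpa using hne) ?_
    (by simpa using hsub)
  simpa using add_smul_mem_closedBall e (mul_nonneg hs hT) hu

end NormedSpace

theorem norm_vec_cos_sin (θ : ℝ) : ‖!₂[Real.cos θ, Real.sin θ]‖ = 1 := by
  simp [EuclideanSpace.norm_eq]

theorem vec_two_add_smul (x y u v t : ℝ) :
    !₂[x, y] + t • !₂[u, v] = !₂[x + t * u, y + t * v] := by
  ext i; fin_cases i <;> simp

theorem dist_vec_two (x y x' y' : ℝ) :
    dist !₂[x, y] !₂[x', y'] = √((x - x') ^ 2 + (y - y') ^ 2) := by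
  simp [EuclideanSpace.dist_eq, Real.dist_eq]

/-- Tangency-based capture guarantee: if at time `t₀ > 0` the evader's reachability
circle is internally tangent to (inscribed in) the pursuer's reachability circle, then
for every evader heading `θE` there is a time `t' ∈ (0, t₀]` at which the evader's
position lies on the pursuer's reachability circle. -/
theorem tangency_capture_guarantee
    (aP vE xP0 yP0 vPx0 vPy0 xE0 yE0 t0 : ℝ)
    (haP : 0 < aP) (hvE : 0 ≤ vE)
    (hne : (xP0, yP0) ≠ (xE0, yE0))
    (ht0 : 0 < t0)
    (hRge : vE * t0 ≤ (1 / 2) * aP * t0 ^ 2)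
    (htan : Real.sqrt ((xP0 - xE0 + vPx0 * t0) ^ 2 + (yP0 - yE0 + vPy0 * t0) ^ 2)
        = (1 / 2) * aP * t0 ^ 2 - vE * t0) :
    ∀ θE : ℝ, ∃ t' : ℝ, 0 < t' ∧ t' ≤ t0 ∧
      (xE0 + vE * t' * Real.cos θE - xP0 - vPx0 * t') ^ 2
        + (yE0 + vE * t' * Real.sin θE - yP0 - vPy0 * t') ^ 2
        = ((1 / 2) * aP * t' ^ 2) ^ 2 := by
  intro θE
  have hstart : !₂[xE0, yE0] ≠ !₂[xP0, yP0] := by simpa [eq_comm] using hne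
  have hdist : dist !₂[xE0, yE0] (!₂[xP0, yP0] + t0 • !₂[vPx0, vPy0])
      = 1 / 2 * aP * t0 ^ 2 - vE * t0 := by
    rw [← htan, vec_two_add_smul, dist_vec_two]
    ring_nf
  obtain ⟨t, ⟨ht_pos, ht_le⟩, hcapture⟩ := exists_capture_of_constant_heading hvE ht0.le
    (norm_vec_cos_sin θE).le hstart (add_le_of_le_sub_left hdist.le)
  refine ⟨t, ht_pos, ht_le, ?_⟩
  rw [← mem_sphere.1 hcapture, vec_two_add_smul, vec_two_add_smul, dist_vec_two,
    Real.sq_sqrt (by positivity)]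
  ring
end

section
/- Let $\bar a_P > 0$, $\bar v_E \ge 0$, and arbitrary $x_P^0,y_P^0,v_{Px}^0,v_{Py}^0,x_E^0,y_E^0 \in \mathbb{R}$. Define $\Gamma(t) = (x_P^0-x_E^0+v_{Px}^0 t)^2+(y_P^0-y_E^0+v_{Py}^0 t)^2-(\tfrac{1}{2}\bar a_P t^2-\bar v_E t)^2$. Then there exists $t \ge 2\bar v_E/\bar a_P$ such that $\Gamma(t) = 0$. -/
/-!
The signed radius gap `½ a t² - s t` vanishes at `t = 2 s / a`, where it is therefore at most the
distance between the centers. That distance grows at most linearly in `t`, so the quadratic gap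
eventually overtakes it, and the intermediate value theorem gives a time at which the two agree.
-/

open Filter Set

theorem tendsto_const_mul_sq_add_mul_atTop {𝕜 : Type*} [Field 𝕜] [LinearOrder 𝕜]
    [IsStrictOrderedRing 𝕜] {a : 𝕜} (ha : 0 < a) (b : 𝕜) :
    Tendsto (fun t : 𝕜 => a * t ^ 2 + b * t) atTop atTop := by
  have linear_factor : Tendsto (fun t : 𝕜 => a * t + b) atTop atTop :=
    tendsto_atTop_add_const_right _ b (tendsto_id.const_mul_atTop ha)
  exact (linear_factor.atTop_mul_atTop₀ tendsto_id).congr fun t => by simp only [id]; ring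

section NormedSpace

variable {V : Type*} [SeminormedAddCommGroup V] [NormedSpace ℝ V]

theorem norm_add_smul_le_of_nonneg (c v : V) {t : ℝ} (ht : 0 ≤ t) :
    ‖c + t • v‖ ≤ ‖c‖ + ‖v‖ * t :=
  calc ‖c + t • v‖ ≤ ‖c‖ + ‖t • v‖ := norm_add_le _ _
    _ = ‖c‖ + ‖v‖ * t := by rw [norm_smul_of_nonneg ht, mul_comm]

theorem eventually_norm_add_smul_le_quadratic (c v : V) {a : ℝ} (ha : 0 < a) (b : ℝ) :
    ∀ᶠ t : ℝ in atTop, ‖c + t • v‖ ≤ a * t ^ 2 + b * t := by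
  filter_upwards [eventually_ge_atTop 0,
    (tendsto_const_mul_sq_add_mul_atTop ha (b - ‖v‖)).eventually_ge_atTop ‖c‖]
    with t ht hgrowth
  linarith [norm_add_smul_le_of_nonneg c v ht]

theorem exists_internal_tangency_time_general (pP vP pE : V) {a : ℝ} (ha : 0 < a) (s : ℝ) :
    ∃ t : ℝ, 2 * s / a ≤ t ∧ ‖pP - pE + t • vP‖ = (1 / 2) * a * t ^ 2 - s * t := by
  have gap_eq_zero : (1 / 2) * a * (2 * s / a) ^ 2 - s * (2 * s / a) = 0 := by
    field_simp
    ring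
  have half_mul_pos : 0 < (1 / 2) * a := by positivity
  have eventually_le_gap :
      ∀ᶠ t : ℝ in atTop, ‖pP - pE + t • vP‖ ≤ (1 / 2) * a * t ^ 2 - s * t := by
    simpa only [neg_mul, ← sub_eq_add_neg] using
      eventually_norm_add_smul_le_quadratic (pP - pE) vP half_mul_pos (-s)
  obtain ⟨t, ht, tangent⟩ := isPreconnected_Ici.intermediate_value₂_eventually₁
    (mem_Ici.2 le_rfl) (le_principal_iff.2 (Ici_mem_atTop (2 * s / a)))
    (f := fun t => (1 / 2) * a * t ^ 2 - s * t) (g := fun t => ‖pP - pE + t • vP‖)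
    (by fun_prop) (by fun_prop) (gap_eq_zero.trans_le (norm_nonneg _)) eventually_le_gap
  exact ⟨t, ht, tangent.symm⟩

end NormedSpace

/-- Existence of an internal tangency time: for any initial data there exists a time
`t ≥ 2 v̄E / āP` at which `Γ(t) = 0`, i.e., the evader's reachability circle is
internally tangent to the pursuer's reachability circle. -/
theorem exists_internal_tangency_time
    (aP vE xP0 yP0 vPx0 vPy0 xE0 yE0 : ℝ)
    (haP : 0 < aP) (hvE : 0 ≤ vE) :
    ∃ t : ℝ, 2 * vE / aP ≤ t ∧
      (xP0 - xE0 + vPx0 * t) ^ 2 + (yP0 - yE0 + vPy0 * t) ^ 2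
        - ((1 / 2) * aP * t ^ 2 - vE * t) ^ 2 = 0 := by
  obtain ⟨t, ht, tangent⟩ := exists_internal_tangency_time_general
    !₂[xP0, yP0] !₂[vPx0, vPy0] !₂[xE0, yE0] haP vE
  exact ⟨t, ht, by rw [← tangent]; simp [EuclideanSpace.real_norm_sq_eq, mul_comm t]⟩
end

section
/- Let $\bar a_P > 0$, $\bar v_E \ge 0$, $t > 0$ with $\bar a_P t > 2\bar v_E$, and suppose $\Gamma(t) = (x_P^0-x_E^0+v_{Px}^0 t)^2+(y_P^0-y_E^0+v_{Py}^0 t)^2-(\tfrac{1}{2}\bar a_P t^2-\bar v_E t)^2 = 0$. Define $x_f = \dfrac{\bar a_P t^2 x_E^0 - 2\bar v_E t (x_P^0+v_{Px}^0 t)}{\bar a_P t^2 - 2\bar v_E t}$ and $y_f = \dfrac{\bar a_P t^2 y_E^0 - 2\bar v_E t (y_P^0+v_{Py}^0 t)}{\bar a_P t^2 - 2\bar v_E t}$. Then $(x_f - x_P^0 - v_{Px}^0 t)^2 + (y_f - y_P^0 - v_{Py}^0 t)^2 = \tfrac{1}{4}\bar a_P^2 t^4$ and $(x_f - x_E^0)^2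 + (y_f - y_E^0)^2 = \bar v_E^2 t^2$, i.e., $(x_f,y_f)$ lies on both reachability circles (it is the tangency point). -/
/-!
The point `(x_f, y_f)` is the external homothetic center `F = (R E - r P) / (R - r)` of the circles
with centers `P`, `E` and radii `R = āP t² / 2`, `r = v̄E t`. Since `F - P` and `F - E` are the
multiples of `E - P` by `R / (R - r)` and `r / (R - r)`, and `Γ(t) = 0` says that `E - P` has
squared length `(R - r)²`, they have squared lengths `R²` and `r²`.
-/

section HomotheticCenter

variable {K V : Type*} [Field K] [AddCommGroup V] [Module K V]

/-- The external homothetic center of the spheres with centers `P`, `E` and radii `R`, `r`: the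
center of the homothety of ratio `r / R` that carries the first sphere to the second. It is their
point of contact when they are internally tangent. For `R = r` it takes the junk value `0`. -/
def homotheticCenter (P E : V) (R r : K) : V :=
  (R - r)⁻¹ • (R • E - r • P)

theorem homotheticCenter_mul_mul {c : K} (hc : c ≠ 0) (P E : V) (R r : K) :
    homotheticCenter P E (c * R) (c * r) = homotheticCenter P E R r := by
  simp only [homotheticCenter, ← mul_sub, mul_smul, ← smul_sub, mul_inv_rev, inv_smul_smul₀ hc]

theorem homotheticCenter_sub_left {R r : K} (hRr : R ≠ r) (P E : V) :
    homotheticCenter P E R r - P = (R / (R - r)) • (E - P) := by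
  have hsub : R - r ≠ 0 := sub_ne_zero.mpr hRr
  rw [homotheticCenter]
  match_scalars <;> field_simp
  ring

theorem homotheticCenter_sub_right {R r : K} (hRr : R ≠ r) (P E : V) :
    homotheticCenter P E R r - E = (r / (R - r)) • (E - P) := by
  have hsub : R - r ≠ 0 := sub_ne_zero.mpr hRr
  rw [homotheticCenter]
  match_scalars <;> field_simp
  ring

theorem quadraticForm_div_smul (Q : QuadraticForm K V) {v : V} {d : K} (hd : d ≠ 0)
    (hv : Q v = d ^ 2) (c : K) : Q ((c / d) • v) = c ^ 2 := by
  rw [QuadraticMap.map_smul, hv, smul_eq_mul]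
  field_simp

theorem quadraticForm_homotheticCenter_sub_left (Q : QuadraticForm K V) {P E : V} {R r : K}
    (hRr : R ≠ r) (htangent : Q (E - P) = (R - r) ^ 2) :
    Q (homotheticCenter P E R r - P) = R ^ 2 := by
  rw [homotheticCenter_sub_left hRr, quadraticForm_div_smul Q (sub_ne_zero.mpr hRr) htangent]

theorem quadraticForm_homotheticCenter_sub_right (Q : QuadraticForm K V) {P E : V} {R r : K}
    (hRr : R ≠ r) (htangent : Q (E - P) = (R - r) ^ 2) :
    Q (homotheticCenter P E R r - E) = r ^ 2 := by
  rw [homotheticCenter_sub_right hRr, quadraticForm_div_smul Q (sub_ne_zero.mpr hRr) htangent]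

end HomotheticCenter

section Plane

variable {K : Type*} [Field K]

/-- The squared Euclidean length `x ^ 2 + y ^ 2` on the coordinate plane, as a quadratic form, so
that it makes sense over any field. -/
def planeSqLength (K : Type*) [Field K] : QuadraticForm K (K × K) :=
  QuadraticMap.sq.prod QuadraticMap.sq

theorem planeSqLength_apply (v : K × K) : planeSqLength K v = v.1 ^ 2 + v.2 ^ 2 := by
  simp only [planeSqLength, QuadraticMap.prod_apply, QuadraticMap.sq_apply, sq]

theorem homotheticCenter_prod (P E : K × K) (R r : K) :
    homotheticCenter P E R r =
      ((R * E.1 - r * P.1) / (R - r), (R * E.2 - r * P.2) / (R - r)) := by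
  ext <;> simp [homotheticCenter, div_eq_inv_mul]

theorem tangency_point_on_both_circles_general [NeZero (2 : K)]
    {aP vE t xP0 yP0 vPx0 vPy0 xE0 yE0 : K} (ht : t ≠ 0) (hne : 2 * vE ≠ aP * t)
    (hΓ : (xP0 - xE0 + vPx0 * t) ^ 2 + (yP0 - yE0 + vPy0 * t) ^ 2
        - ((1 / 2) * aP * t ^ 2 - vE * t) ^ 2 = 0) :
    let xf := (aP * t ^ 2 * xE0 - 2 * vE * t * (xP0 + vPx0 * t)) / (aP * t ^ 2 - 2 * vE * t)
    let yf := (aP * t ^ 2 * yE0 - 2 * vE * t * (yP0 + vPy0 * t)) / (aP * t ^ 2 - 2 * vE * t)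
    (xf - xP0 - vPx0 * t) ^ 2 + (yf - yP0 - vPy0 * t) ^ 2 = (1 / 4) * aP ^ 2 * t ^ 4 ∧
    (xf - xE0) ^ 2 + (yf - yE0) ^ 2 = vE ^ 2 * t ^ 2 := by
  intro xf yf
  have two_ne : (2 : K) ≠ 0 := NeZero.ne 2
  set P : K × K := (xP0 + vPx0 * t, yP0 + vPy0 * t) with hP
  set E : K × K := (xE0, yE0) with hE
  set R : K := (1 / 2) * aP * t ^ 2 with hR
  set r : K := vE * t with hr
  have two_mul_R : 2 * R = aP * t ^ 2 := by rw [hR]; field_simp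
  have radii_ne : R ≠ r := fun h ↦ hne <| mul_right_cancel₀ ht <| by
    linear_combination two_mul_R - 2 * h
  have htangent : planeSqLength K (E - P) = (R - r) ^ 2 := by
    simp only [planeSqLength_apply, hP, hE, Prod.mk_sub_mk]
    linear_combination hΓ
  have hF : homotheticCenter P E R r = (xf, yf) := by
    rw [← homotheticCenter_mul_mul two_ne, homotheticCenter_prod, two_mul_R, hr, ← mul_assoc]
  have hFP := quadraticForm_homotheticCenter_sub_left _ radii_ne htangent
  have hFE := quadraticForm_homotheticCenter_sub_right _ radii_ne htangent
  rw [hF] at hFP hFE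
  simp only [hP, hE, planeSqLength_apply, Prod.mk_sub_mk, ← sub_sub] at hFP hFE
  have R_sq : R ^ 2 = (1 / 4) * aP ^ 2 * t ^ 4 := by
    have quarter : (1 / 4 : K) = (1 / 2) ^ 2 := by rw [one_div_pow]; norm_num
    rw [hR, quarter, mul_pow, mul_pow, ← pow_mul]
  exact ⟨hFP.trans R_sq, hFE.trans (mul_pow vE t 2)⟩

end Plane

/-- At an internal tangency time `t` (with `āP t > 2 v̄E` and `Γ(t) = 0`), the point
`(x_f, y_f)` given by the stated formulas lies on both the pursuer's and the evader's
reachability circles, i.e., it is the tangency point. -/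
theorem tangency_point_on_both_circles
    (aP vE t xP0 yP0 vPx0 vPy0 xE0 yE0 : ℝ)
    (haP : 0 < aP) (hvE : 0 ≤ vE) (ht : 0 < t)
    (hgt : 2 * vE < aP * t)
    (hΓ : (xP0 - xE0 + vPx0 * t) ^ 2 + (yP0 - yE0 + vPy0 * t) ^ 2
        - ((1 / 2) * aP * t ^ 2 - vE * t) ^ 2 = 0) :
    let xf := (aP * t ^ 2 * xE0 - 2 * vE * t * (xP0 + vPx0 * t)) / (aP * t ^ 2 - 2 * vE * t)
    let yf := (aP * t ^ 2 * yE0 - 2 * vE * t * (yP0 + vPy0 * t)) / (aP * t ^ 2 - 2 * vE * t)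
    (xf - xP0 - vPx0 * t) ^ 2 + (yf - yP0 - vPy0 * t) ^ 2 = (1 / 4) * aP ^ 2 * t ^ 4 ∧
    (xf - xE0) ^ 2 + (yf - yE0) ^ 2 = vE ^ 2 * t ^ 2 :=
  tangency_point_on_both_circles_general ht.ne' hgt.ne hΓ
end

section
/- Let $\bar v_P > \bar v_E \ge 0$ and $p_x,p_y,q_x,q_y \in \mathbb{R}$ with $p_x^2+p_y^2 = \bar v_P^2$. Set $h = p_xq_x+p_yq_y$, assume $g > 0$ satisfies $g^2 = h^2-(\bar v_P^2-\bar v_E^2)(q_x^2+q_y^2)$, set $t_f = (g-h)/(\bar v_P^2-\bar v_E^2)$ and assume $t_f \ne 0$. Define $e_x = p_x+q_x/t_f$ and $e_y = p_y+q_y/t_f$. Then \[\frac{1}{\bar v_P^2-\bar v_E^2}\Big(\frac{h}{g}-1\Big)\big(\bar v_E^2 - p_xe_x - p_ye_y\big) + \frac{q_xe_x+q_ye_y}{g} = 0.\] -/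
/-!
Since `t` is a root of the interception quadratic `(B p p - c) t² + 2 (B p q) t + B q q = 0`, the
velocity `e = p + t⁻¹ q` has squared speed `B e e = c`. The coefficient of `c - B p e` in the
identity is `-t / g`, so the identity reads `(-t B (e - p) e + B q e) / g = 0`, which holds because
`t (e - p) = q`.
-/

section InterceptionQuadratic

variable {K : Type*} [Field K]

theorem quadratic_eq_zero_of_reduced_discrim_eq_sq {a h b g t : K} (ha : a ≠ 0)
    (hg : g ^ 2 = h ^ 2 - a * b) (ht : t = (g - h) / a) :
    a * t ^ 2 + 2 * h * t + b = 0 := by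
  have hat : a * t = g - h := by rw [ht, mul_div_cancel₀ _ ha]
  apply mul_left_cancel₀ ha
  linear_combination (a * t + g + h) * hat + hg

theorem one_div_mul_div_sub_one_eq_neg_div {a h g t : K} (hg : g ≠ 0) (ht : t = (g - h) / a) :
    1 / a * (h / g - 1) = -t / g := by
  rw [ht, div_sub_one hg]
  ring

end InterceptionQuadratic

section InterceptVelocity

variable {K V : Type*} [Field K] [AddCommGroup V] [Module K V] {B : LinearMap.BilinForm K V}

theorem apply_self_add_inv_smul_eq_of_quadratic (hB : B.IsSymm) {p q : V} {c t : K} (ht : t ≠ 0)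
    (hquad : (B p p - c) * t ^ 2 + 2 * B p q * t + B q q = 0) :
    B (p + t⁻¹ • q) (p + t⁻¹ • q) = c := by
  have hqp : B q p = B p q := hB.eq q p
  simp only [map_add, map_smul, LinearMap.add_apply, LinearMap.smul_apply, smul_eq_mul, hqp]
  field_simp
  linear_combination hquad

theorem mul_apply_add_inv_smul_sub_apply (p q x : V) {t : K} (ht : t ≠ 0) :
    t * (B (p + t⁻¹ • q) x - B p x) = B q x := by
  rw [← LinearMap.sub_apply, ← map_sub, add_sub_cancel_left, map_smul, LinearMap.smul_apply,
    smul_eq_mul, mul_inv_cancel_left₀ ht]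

theorem hji_final_identity_general (hB : B.IsSymm) {p q e : V} {a c g t : K}
    (hp : B p p = a) (hac : a - c ≠ 0) (hg : g ≠ 0)
    (hg2 : g ^ 2 = B p q ^ 2 - (a - c) * B q q)
    (ht : t = (g - B p q) / (a - c)) (ht0 : t ≠ 0) (he : e = p + t⁻¹ • q) :
    1 / (a - c) * (B p q / g - 1) * (c - B p e) + B q e / g = 0 := by
  have hquad : (B p p - c) * t ^ 2 + 2 * B p q * t + B q q = 0 :=
    hp ▸ quadratic_eq_zero_of_reduced_discrim_eq_sq hac hg2 ht
  have hspeed : B e e = c := he ▸ apply_self_add_inv_smul_eq_of_quadratic hB ht0 hquad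
  have hqe : t * (B e e - B p e) = B q e := by
    simpa only [← he] using mul_apply_add_inv_smul_sub_apply p q e ht0
  calc 1 / (a - c) * (B p q / g - 1) * (c - B p e) + B q e / g
      = -t / g * (B e e - B p e) + t * (B e e - B p e) / g := by
        rw [one_div_mul_div_sub_one_eq_neg_div hg ht, hqe, hspeed]
    _ = 0 := by ring

end InterceptVelocity

section DotProduct

variable {R : Type*} [CommSemiring R]

theorem isSymm_dotProductBilin {n : Type*} [Fintype n] :
    LinearMap.BilinForm.IsSymm (dotProductBilin R R : LinearMap.BilinForm R (n → R)) :=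
  ⟨dotProduct_comm⟩

theorem dotProductBilin_vec_two (a b c d : R) :
    dotProductBilin R R ![a, b] ![c, d] = a * c + b * d :=
  Matrix.vec2_dotProduct'

end DotProduct

/-- The final algebraic identity verifying the HJI equation in the regime where the
pursuer cannot capture the evader before reaching its maximum speed. -/
theorem hji_final_identity (vP vE px py qx qy g : ℝ)
    (hlt : vE < vP) (hvE : 0 ≤ vE)
    (hp : px ^ 2 + py ^ 2 = vP ^ 2)
    (hg : 0 < g)
    (hg2 : g ^ 2 = (px * qx + py * qy) ^ 2 - (vP ^ 2 - vE ^ 2) * (qx ^ 2 + qy ^ 2)) :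
    let h := px * qx + py * qy
    let tf := (g - h) / (vP ^ 2 - vE ^ 2)
    tf ≠ 0 →
      let ex := px + qx / tf
      let ey := py + qy / tf
      (1 / (vP ^ 2 - vE ^ 2)) * (h / g - 1) * (vE ^ 2 - px * ex - py * ey)
        + (qx * ex + qy * ey) / g = 0 := by
  intro h tf htf ex ey
  have hv : vP ^ 2 - vE ^ 2 ≠ 0 := (sub_pos.2 (pow_lt_pow_left₀ hlt hvE two_ne_zero)).ne'
  have he : ![ex, ey] = ![px, py] + tf⁻¹ • ![qx, qy] := by simp [ex, ey, div_eq_inv_mul]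
  simpa only [dotProductBilin_vec_two, ← sub_sub] using
    hji_final_identity_general isSymm_dotProductBilin (by simpa [dotProductBilin_vec_two, ← sq])
      hv hg.ne' (by simpa [dotProductBilin_vec_two, ← sq]) (by rw [dotProductBilin_vec_two]) htf he
end

section
/- Let $\bar a_P, \bar v_P, \bar v_E, t, \theta \in \mathbb{R}$ with $t > 0$. Define $p_x = v_{Px}+\bar a_P t\cos\theta$, $p_y = v_{Py}+\bar a_P t\sin\theta$, $q_x = x_P-x_E-\tfrac{1}{2}\bar a_P t^2\cos\theta$, $q_y = y_P-y_E-\tfrac{1}{2}\bar a_P t^2\sin\theta$, and assume $p_x^2+p_y^2 = \bar v_P^2$, $\bar v_E t\cos\theta = q_x+p_xt$, and $\bar v_E t\sin\theta = q_y+p_yt$. Then $(\bar v_P^2-\bar v_E^2)t^2+2(p_xq_x+p_yq_y)t+q_x^2+q_y^2 = 0$ holds if and only if $(x_P-x_E+v_{Px}t)^2+(y_P-y_E+v_{Py}t)^2 = (\tfrac{1}{2}\bar a_P t^2-\bar v_E t)^2$, and in fact both equalities hold. -/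
/-!
Relative to the evader's initial position, a pursuer that accelerates along the unit vector
`u = (cos θ, sin θ)` until it reaches the velocity `p` moves on the line `q + p t` from then on.
If it captures an evader that runs along the same `u`, then `q + p t = (vE t) u`. Taking squared
lengths gives the capture-time quadratic, since `p` has length `vP`. Moving the part
`(½ aP t²) u` that is due to the acceleration to the other side, and taking squared lengths again,
gives the internal-tangency equation.
-/

section CommRing

variable {R : Type*} [CommRing R]

theorem mul_sq_add_mul_sq_of_sq_add_sq_eq_one {c s : R} (hcs : c ^ 2 + s ^ 2 = 1) (r : R) :
    (r * c) ^ 2 + (r * s) ^ 2 = r ^ 2 := by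
  rw [mul_pow, mul_pow, ← mul_add, hcs, mul_one]

theorem capture_quadratic_eq_zero_iff {px py vP : R} (hp : px ^ 2 + py ^ 2 = vP ^ 2)
    (qx qy vE t : R) :
    (vP ^ 2 - vE ^ 2) * t ^ 2 + 2 * (px * qx + py * qy) * t + qx ^ 2 + qy ^ 2 = 0 ↔
      (qx + px * t) ^ 2 + (qy + py * t) ^ 2 = (vE * t) ^ 2 := by
  constructor <;> intro h
  · linear_combination h + t ^ 2 * hp
  · linear_combination h - t ^ 2 * hp

end CommRing

section Field

variable {K : Type*} [Field K] [NeZero (2 : K)]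

theorem line_after_acceleration_eq (d v a c t : K) :
    (d - (1 / 2) * a * t ^ 2 * c) + (v + a * t * c) * t
      = (d + v * t) + (1 / 2) * a * t ^ 2 * c := by
  field

theorem drift_eq_mul_of_capture {d v a c w t : K}
    (hcapture : w * t * c = (d - (1 / 2) * a * t ^ 2 * c) + (v + a * t * c) * t) :
    d + v * t = (w * t - (1 / 2) * a * t ^ 2) * c := by
  rw [line_after_acceleration_eq] at hcapture
  rw [sub_mul, hcapture, add_sub_cancel_right]

end Field

/-- Continuity of the value function at the boundary between the two strategy regimes:
when capture occurs exactly when the pursuer reaches maximum speed, the after-maximum-speed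
capture-time quadratic is equivalent to the internal-tangency equation of the
before-maximum-speed regime, and in fact both hold. -/
theorem regime_boundary_equivalence
    (aP vP vE t θ xP yP vPx vPy xE yE : ℝ) (ht : 0 < t) :
    let px := vPx + aP * t * Real.cos θ
    let py := vPy + aP * t * Real.sin θ
    let qx := xP - xE - (1 / 2) * aP * t ^ 2 * Real.cos θ
    let qy := yP - yE - (1 / 2) * aP * t ^ 2 * Real.sin θ
    px ^ 2 + py ^ 2 = vP ^ 2 →
    vE * t * Real.cos θ = qx + px * t →
    vE * t * Real.sin θ = qy + py * t →
    (((vP ^ 2 - vE ^ 2) * t ^ 2 + 2 * (px * qx + py * qy) * t + qx ^ 2 + qy ^ 2 = 0 ↔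
      (xP - xE + vPx * t) ^ 2 + (yP - yE + vPy * t) ^ 2
        = ((1 / 2) * aP * t ^ 2 - vE * t) ^ 2) ∧
     ((vP ^ 2 - vE ^ 2) * t ^ 2 + 2 * (px * qx + py * qy) * t + qx ^ 2 + qy ^ 2 = 0) ∧
     ((xP - xE + vPx * t) ^ 2 + (yP - yE + vPy * t) ^ 2
        = ((1 / 2) * aP * t ^ 2 - vE * t) ^ 2)) := by
  intro px py qx qy hspeed hcapture_x hcapture_y
  have hunit : Real.cos θ ^ 2 + Real.sin θ ^ 2 = 1 := Real.cos_sq_add_sin_sq θ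
  have hquadratic :
      (vP ^ 2 - vE ^ 2) * t ^ 2 + 2 * (px * qx + py * qy) * t + qx ^ 2 + qy ^ 2 = 0 := by
    rw [capture_quadratic_eq_zero_iff hspeed, ← hcapture_x, ← hcapture_y]
    exact mul_sq_add_mul_sq_of_sq_add_sq_eq_one hunit (vE * t)
  have htangency : (xP - xE + vPx * t) ^ 2 + (yP - yE + vPy * t) ^ 2
      = ((1 / 2) * aP * t ^ 2 - vE * t) ^ 2 := by
    rw [drift_eq_mul_of_capture hcapture_x, drift_eq_mul_of_capture hcapture_y,
      mul_sq_add_mul_sq_of_sq_add_sq_eq_one hunit, sub_sq_comm]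
  exact ⟨iff_of_true hquadratic htangency, hquadratic, htangency⟩
end

section
/- Let $\bar v_P > \bar v_E \ge 0$, let $(\Delta_x, \Delta_y) \in \mathbb{R}^2$ with $(\Delta_x,\Delta_y) \ne (0,0)$, and let $\theta \in \mathbb{R}$. Define $f(\tau) = \dfrac{1}{\bar v_P}\sqrt{(\Delta_x+\bar v_E\tau\cos\theta)^2+(\Delta_y+\bar v_E\tau\sin\theta)^2}$ for $\tau \ge 0$. Then (i) there exists $\tau > 0$ with $f(\tau) = \tau$; and (ii) for every $\tau_0 > 0$ with $f(\tau_0) < \tau_0$, there exists $\tau' \in (0, \tau_0)$ with $f(\tau') = \tau'$. -/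
/-!
The interception time `f` is continuous and positive at `0`. Since the evader is slower than the
pursuer, the triangle inequality bounds `f` by an affine function of slope less than `1`, so
`f τ < τ` for all large `τ`. Whenever `f τ₀ < τ₀`, the intermediate value theorem on `[0, τ₀]` gives
a fixed point, which lies in the interior because neither endpoint is fixed. The argument uses only
the speed bound, so it applies to every Lipschitz trajectory of the evader in a metric space.
-/

open Filter Function Set
open scoped NNReal

theorem exists_mem_Ioo_isFixedPt {α : Type*} [ConditionallyCompleteLinearOrder α]
    [DenselyOrdered α] [TopologicalSpace α] [OrderTopology α] {f : α → α} {a b : α}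
    (hf : ContinuousOn f (Icc a b)) (hab : a ≤ b) (ha : a < f a) (hb : f b < b) :
    ∃ c ∈ Ioo a b, IsFixedPt f c := by
  obtain ⟨c, hc, hfc⟩ := exists_mem_Icc_isFixedPt hf hab ha.le hb.le
  have hac : a ≠ c := by
    rintro rfl
    exact ha.ne' hfc
  have hcb : c ≠ b := by
    rintro rfl
    exact hb.ne hfc
  exact ⟨c, ⟨hc.1.lt_of_ne hac, hc.2.lt_of_ne hcb⟩, hfc⟩

theorem eventually_add_mul_lt_mul {k v : ℝ} (c : ℝ) (hkv : k < v) :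
    ∀ᶠ τ : ℝ in atTop, c + k * τ < v * τ := by
  filter_upwards [eventually_gt_atTop (c / (v - k))] with τ hτ
  have hc : c < τ * (v - k) := (div_lt_iff₀ (sub_pos.2 hkv)).1 hτ
  linarith

section InterceptTime

variable {X : Type*} [PseudoMetricSpace X] {v : ℝ} {p : X} {γ : ℝ → X} {K : ℝ≥0}

/-- The time a pursuer needs to move from `p` along a shortest path at speed `v` to the point that
the evader with trajectory `γ` occupies at time `τ`. The fixed points of this function of `τ` are
the times at which such a pursuer, starting at time `0`, captures the evader. The value is only
meaningful for `0 < v`. -/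
noncomputable def interceptTime (v : ℝ) (p : X) (γ : ℝ → X) (τ : ℝ) : ℝ :=
  dist p (γ τ) / v

theorem continuousOn_interceptTime {s : Set ℝ} (hγ : ContinuousOn γ s) :
    ContinuousOn (interceptTime v p γ) s := by
  unfold interceptTime
  fun_prop

theorem exists_mem_Ioo_isFixedPt_interceptTime {τ₀ : ℝ} (hγ : ContinuousOn γ (Icc 0 τ₀))
    (hv : 0 < v) (hp : 0 < dist p (γ 0)) (hτ₀ : 0 ≤ τ₀) (hlt : interceptTime v p γ τ₀ < τ₀) :
    ∃ τ ∈ Ioo 0 τ₀, IsFixedPt (interceptTime v p γ) τ :=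
  exists_mem_Ioo_isFixedPt (continuousOn_interceptTime hγ) hτ₀ (div_pos hp hv) hlt

theorem eventually_interceptTime_lt (p : X) (hγ : LipschitzOnWith K γ (Ici 0)) (hKv : K < v) :
    ∀ᶠ τ in atTop, interceptTime v p γ τ < τ := by
  filter_upwards [eventually_ge_atTop 0, eventually_add_mul_lt_mul (dist p (γ 0)) hKv]
    with τ hτ hlt
  rw [interceptTime, div_lt_iff₀' (K.coe_nonneg.trans_lt hKv)]
  calc
    dist p (γ τ) ≤ dist p (γ 0) + dist (γ 0) (γ τ) := dist_triangle _ _ _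
    _ ≤ dist p (γ 0) + K * dist 0 τ := by gcongr; exact hγ.dist_le_mul 0 self_mem_Ici τ hτ
    _ = dist p (γ 0) + K * τ := by rw [dist_zero_left, Real.norm_of_nonneg hτ]
    _ < v * τ := hlt

theorem straight_line_capture_fixed_point_general (hγ : LipschitzOnWith K γ (Ici 0)) (hKv : K < v)
    (hp : 0 < dist p (γ 0)) :
    (∃ τ, 0 < τ ∧ interceptTime v p γ τ = τ) ∧
    (∀ τ₀, 0 < τ₀ → interceptTime v p γ τ₀ < τ₀ →
      ∃ τ, 0 < τ ∧ τ < τ₀ ∧ interceptTime v p γ τ = τ) := by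
  have earlier_fixed_point : ∀ τ₀, 0 < τ₀ → interceptTime v p γ τ₀ < τ₀ →
      ∃ τ, 0 < τ ∧ τ < τ₀ ∧ interceptTime v p γ τ = τ := by
    intro τ₀ hτ₀ hlt
    obtain ⟨τ, ⟨hτ, hττ₀⟩, hfix⟩ := exists_mem_Ioo_isFixedPt_interceptTime
      (hγ.continuousOn.mono Icc_subset_Ici_self) (K.coe_nonneg.trans_lt hKv) hp hτ₀.le hlt
    exact ⟨τ, hτ, hττ₀, hfix⟩
  obtain ⟨τ₀, hτ₀, hlt⟩ :=
    ((eventually_gt_atTop 0).and (eventually_interceptTime_lt p hγ hKv)).exists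
  obtain ⟨τ, hτ, -, hfix⟩ := earlier_fixed_point τ₀ hτ₀ hlt
  exact ⟨⟨τ, hτ, hfix⟩, earlier_fixed_point⟩

end InterceptTime

section UniformMotion

/-- The position at time `τ` of a point of the Euclidean plane that starts at `(Δx, Δy)` and moves
with speed `vE` in the direction `θ`. It is the evader's position relative to where the pursuer
was at time `0`. -/
noncomputable def evaderPosition (vE Δx Δy θ τ : ℝ) : EuclideanSpace ℝ (Fin 2) :=
  !₂[Δx + vE * τ * Real.cos θ, Δy + vE * τ * Real.sin θ]

variable (v vE Δx Δy θ : ℝ)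

theorem dist_evaderPosition (σ τ : ℝ) :
    dist (evaderPosition vE Δx Δy θ σ) (evaderPosition vE Δx Δy θ τ) = |vE| * dist σ τ := by
  have hsq : (vE * σ * Real.cos θ - vE * τ * Real.cos θ) ^ 2 +
      (vE * σ * Real.sin θ - vE * τ * Real.sin θ) ^ 2 = (vE * (σ - τ)) ^ 2 := by
    linear_combination (vE * (σ - τ)) ^ 2 * Real.sin_sq_add_cos_sq θ
  simp [evaderPosition, EuclideanSpace.dist_eq, Real.dist_eq, hsq, Real.sqrt_sq_eq_abs, abs_mul]

theorem lipschitzWith_evaderPosition : LipschitzWith ‖vE‖₊ (evaderPosition vE Δx Δy θ) :=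
  LipschitzWith.of_dist_le_mul fun σ τ => (dist_evaderPosition vE Δx Δy θ σ τ).le

theorem interceptTime_zero_evaderPosition (τ : ℝ) :
    interceptTime v 0 (evaderPosition vE Δx Δy θ) τ =
      √((Δx + vE * τ * Real.cos θ) ^ 2 + (Δy + vE * τ * Real.sin θ) ^ 2) / v := by
  simp [interceptTime, evaderPosition, EuclideanSpace.norm_eq]

variable {Δx Δy} in
theorem dist_zero_evaderPosition_zero_pos (hΔ : (Δx, Δy) ≠ (0, 0)) :
    0 < dist 0 (evaderPosition vE Δx Δy θ 0) := by
  rw [dist_pos]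
  intro h
  have hx : 0 = Δx := by simpa [evaderPosition] using congr($h 0)
  have hy : 0 = Δy := by simpa [evaderPosition] using congr($h 1)
  exact hΔ (by rw [← hx, ← hy])

end UniformMotion

/-- Straight-line capture after reaching maximum speed: (i) the fixed-point equation
`f(τ) = τ` has a positive solution; (ii) any `τ₀ > 0` with `f(τ₀) < τ₀` is strictly
larger than some positive fixed point of `f`. -/
theorem straight_line_capture_fixed_point
    (vP vE Δx Δy θ : ℝ) (hlt : vE < vP) (hvE : 0 ≤ vE)
    (hΔ : (Δx, Δy) ≠ (0, 0)) :
    let f : ℝ → ℝ := fun τ =>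
      Real.sqrt ((Δx + vE * τ * Real.cos θ) ^ 2 + (Δy + vE * τ * Real.sin θ) ^ 2) / vP
    (∃ τ : ℝ, 0 < τ ∧ f τ = τ) ∧
    (∀ τ0 : ℝ, 0 < τ0 → f τ0 < τ0 → ∃ τ' : ℝ, 0 < τ' ∧ τ' < τ0 ∧ f τ' = τ') := by
  have hspeed : (‖vE‖₊ : ℝ) < vP := by rwa [coe_nnnorm, Real.norm_of_nonneg hvE]
  simpa only [interceptTime_zero_evaderPosition] using straight_line_capture_fixed_point_general
    (lipschitzWith_evaderPosition vE Δx Δy θ).lipschitzOnWith hspeed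
    (dist_zero_evaderPosition_zero_pos vE θ hΔ)
end
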